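/- Let p be an odd prime with p > 14. Then (p^7/2^15) · Σ_{θ=1}^{p-1} 1/sin^14(πθ/p) = (1/32768) · p^7 · ((4/18243225)p^14 + (1382/273648375)p^12 + (4/66825)p^10 + (311/637875)p^8 + (1184/382725)p^6 + (1888/111375)p^4 + (1024/9009)p^2 - 36740617/273648375). (This is the genus-8 case of the degree formula of Corollary 5.4.) -/

import Mathlib

open Real

/-!
For `n ≠ 0` the finite product `sin² (nφ) = n² sin² φ ∏_θ (1 - sin² φ / sin² (πθ/n))`, a form of the
factorisation of the Chebyshev polynomial `U_{n-1}`, says that with `t = sin² φ`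
`1 - T_n (1 - 2t) = 2 n² t ∏_θ (1 - t / sin² (πθ/n))`.
The Taylor coefficients of `T_n` at `1` are explicit, so this gives the coefficients of the product
on the right as polynomials in `n²`, and Newton's identities turn them into the power sums of the
numbers `1 / sin² (πθ/n)`.
-/

section NewtonIdentities

open Polynomial

variable {ι R : Type*} [CommRing R] (s : Finset ι) (x : ι → R)

theorem coeff_prod_one_sub_C_mul_X (k : ℕ) :
    (∏ i ∈ s, (1 - C (x i) * X)).coeff k = (-1) ^ k * (s.val.map x).esymm k := by
  have expand : ∏ i ∈ s, (1 - C (x i) * X) =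
      ∑ t ∈ s.powerset, C (∏ i ∈ t, -x i) * X ^ t.card := by
    simp only [sub_eq_add_neg, ← neg_mul, ← C_neg, Finset.prod_one_add, Finset.prod_mul_distrib,
      Finset.prod_const, map_prod]
  rw [expand, finsetSum_coeff, Finset.esymm_map_val, Finset.powersetCard_eq_filter,
    Finset.sum_filter, Finset.mul_sum]
  refine Finset.sum_congr rfl fun t _ ↦ ?_
  rw [coeff_C_mul_X_pow, Finset.prod_neg]
  split_ifs <;> grind

theorem mul_esymm_map_val_eq_sum (k : ℕ) :
    k * (s.val.map x).esymm k = (-1) ^ (k + 1) *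
      ∑ j ∈ Finset.range k, (-1) ^ j * (s.val.map x).esymm j * ∑ i ∈ s, x i ^ (k - j) := by
  have map_univ : (Finset.univ.val.map fun i : s ↦ x i) = s.val.map x := by
    rw [Finset.univ_eq_attach, Finset.attach_val]
    exact Multiset.attach_map_val' s.val x
  have newton := congrArg (MvPolynomial.aeval fun i : s ↦ x i) (MvPolynomial.mul_esymm_eq_sum s R k)
  simp only [map_mul, map_natCast, map_pow, map_neg, map_one, map_sum, map_univ,
    MvPolynomial.aeval_esymm_eq_multiset_esymm, MvPolynomial.psum, MvPolynomial.aeval_X] at newton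
  rw [newton, Finset.sum_filter, Finset.Nat.sum_antidiagonal_eq_sum_range_succ_mk,
    Finset.sum_range_succ, if_neg (lt_irrefl k), add_zero]
  refine congrArg _ (Finset.sum_congr rfl fun j hj ↦ ?_)
  rw [if_pos (Finset.mem_range.mp hj), ← Finset.sum_coe_sort s fun i ↦ x i ^ (k - j)]

theorem mul_coeff_prod_one_sub_C_mul_X (k : ℕ) :
    k * (∏ i ∈ s, (1 - C (x i) * X)).coeff k =
      -∑ j ∈ Finset.range k,
        (∏ i ∈ s, (1 - C (x i) * X)).coeff j * ∑ i ∈ s, x i ^ (k - j) := by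
  simp only [coeff_prod_one_sub_C_mul_X]
  rw [mul_left_comm, mul_esymm_map_val_eq_sum, ← mul_assoc, ← pow_add,
    Odd.neg_one_pow ⟨k, by ring⟩, neg_one_mul]

end NewtonIdentities

section Chebyshev

open Polynomial Polynomial.Chebyshev

theorem coeff_T_comp_one_sub_two_mul_X {𝔽 : Type*} [Field 𝔽] [CharZero 𝔽] (n : ℤ) (k : ℕ) :
    ((T 𝔽 n).comp (1 - 2 * X)).coeff k =
      ∏ l ∈ Finset.range k, (-2 * ((n : 𝔽) ^ 2 - l ^ 2) / ((l + 1) * (2 * l + 1))) := by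
  have comp_eq : (T 𝔽 n).comp (1 - 2 * X) = (taylor 1 (T 𝔽 n)).comp (C (-2) * X) := by
    rw [taylor_apply, comp_assoc]
    congr 1
    simp [sub_eq_neg_add, C_ofNat]
  have taylor_coeff_eq : (k.factorial : 𝔽) * (taylor 1 (T 𝔽 n)).coeff k =
      (derivative^[k] (T 𝔽 n)).eval 1 := by
    rw [taylor_coeff, ← factorial_smul_hasseDeriv]
    simp
  have prod_add_one : ∏ l ∈ Finset.range k, (l + 1 : 𝔽) = k.factorial := by
    exact_mod_cast congrArg (Nat.cast (R := 𝔽)) (Finset.prod_range_add_one_eq_factorial k)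
  rw [iterate_derivative_T_eval_one_eq_div, mul_comm,
    ← eq_div_iff (Nat.cast_ne_zero.mpr k.factorial_ne_zero)] at taylor_coeff_eq
  rw [comp_eq, comp_C_mul_X_coeff, taylor_coeff_eq, Finset.prod_div_distrib,
    Finset.prod_mul_distrib, Finset.prod_mul_distrib, prod_add_one, Finset.prod_const,
    Finset.card_range, div_div, mul_comm, mul_div_assoc, mul_comm (k.factorial : 𝔽)]
  push_cast
  rfl

theorem U_real_eq_prod (n : ℕ) :
    U ℝ n = C (2 ^ n) * ∏ θ ∈ Finset.Icc 1 n, (X - C (cos (π * θ / (n + 1)))) := by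
  have roots_eq : (U ℝ n).roots =
      (Finset.range n).val.map fun k : ℕ ↦ cos ((k + 1) * π / (n + 1)) := by
    rw [roots_U_real]
    exact Multiset.dedup_eq_self.mpr (roots_U_real_nodup n)
  have card_roots : (U ℝ n).roots.card = (U ℝ n).natDegree := by
    simp [roots_eq]
  have factored := C_leadingCoeff_mul_prod_multiset_X_sub_C card_roots
  rw [roots_eq, leadingCoeff_U_natCast, Multiset.map_map, Finset.range_eq_Ico] at factored
  rw [← Finset.Ico_add_one_right_eq_Icc, ← factored, ← Finset.prod_Ico_add' _ 0 n 1]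
  simp only [Nat.cast_add, Nat.cast_one, mul_comm π]
  rfl

theorem U_real_eval_sq (n : ℕ) (x : ℝ) :
    (U ℝ n).eval x ^ 2 = 4 ^ n * ∏ θ ∈ Finset.Icc 1 n, (x ^ 2 - cos (π * θ / (n + 1)) ^ 2) := by
  have eval_eq_prod_sub (y : ℝ) :
      (U ℝ n).eval y = 2 ^ n * ∏ θ ∈ Finset.Icc 1 n, (y - cos (π * θ / (n + 1))) := by
    rw [U_real_eq_prod]; simp [eval_prod]
  have eval_eq_prod_add :
      (U ℝ n).eval x = 2 ^ n * ∏ θ ∈ Finset.Icc 1 n, (x + cos (π * θ / (n + 1))) := by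
    have reflect : (U ℝ n).eval x = (-1) ^ n * (U ℝ n).eval (-x) := by
      simpa [Int.negOnePow_def] using U_eval_neg (R := ℝ) n (-x)
    have prod_neg := Finset.prod_neg (s := Finset.Icc 1 n) fun θ : ℕ ↦ -x - cos (π * θ / (n + 1))
    simp only [neg_sub', neg_neg, sub_neg_eq_add, Nat.card_Icc, Nat.add_sub_cancel] at prod_neg
    rw [reflect, eval_eq_prod_sub, prod_neg, mul_left_comm]
  rw [sq]
  nth_rw 1 [eval_eq_prod_sub]
  rw [eval_eq_prod_add, mul_mul_mul_comm, ← mul_pow, ← Finset.prod_mul_distrib]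
  norm_num [← sq_sub_sq, mul_comm]

theorem four_pow_mul_prod_sin_sq (n : ℕ) :
    4 ^ n * ∏ θ ∈ Finset.Icc 1 n, sin (π * θ / (n + 1)) ^ 2 = ((n : ℝ) + 1) ^ 2 := by
  have eval_one_sq := U_real_eval_sq n 1
  rw [U_eval_one] at eval_one_sq
  simpa only [one_pow, ← sin_sq, Int.cast_natCast] using eval_one_sq.symm

theorem sin_pi_mul_div_ne_zero {n θ : ℕ} (hθ : θ ∈ Finset.Icc 1 (n - 1)) :
    sin (π * θ / n) ≠ 0 := by
  obtain ⟨hpos, hle⟩ := Finset.mem_Icc.mp hθ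
  have cast_pos : (0 : ℝ) < θ := by exact_mod_cast hpos
  have hlt : (θ : ℝ) < n := by exact_mod_cast (by omega : θ < n)
  have hn : (0 : ℝ) < n := cast_pos.trans hlt
  refine (sin_pos_of_pos_of_lt_pi (by positivity) ?_).ne'
  rw [div_lt_iff₀ hn]
  gcongr

theorem sin_nat_mul_sq {n : ℕ} (hn : n ≠ 0) (φ : ℝ) :
    sin (n * φ) ^ 2 = n ^ 2 * sin φ ^ 2 *
      ∏ θ ∈ Finset.Icc 1 (n - 1), (1 - 1 / sin (π * θ / n) ^ 2 * sin φ ^ 2) := by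
  obtain ⟨m, rfl⟩ := Nat.exists_eq_succ_of_ne_zero hn
  have factor (θ : ℕ) (hθ : θ ∈ Finset.Icc 1 m) :
      cos φ ^ 2 - cos (π * θ / (m + 1)) ^ 2 =
        sin (π * θ / (m + 1)) ^ 2 * (1 - 1 / sin (π * θ / (m + 1)) ^ 2 * sin φ ^ 2) := by
    have sin_ne_zero := sin_pi_mul_div_ne_zero (n := m + 1) hθ
    push_cast at sin_ne_zero
    field_simp
    rw [cos_sq', cos_sq']
    ring
  have sin_succ_mul := U_real_cos φ m
  push_cast at sin_succ_mul ⊢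
  rw [← sin_succ_mul, mul_pow, U_real_eval_sq, Finset.prod_congr rfl factor,
    Finset.prod_mul_distrib, ← mul_assoc, four_pow_mul_prod_sin_sq]
  ring

/-- The polynomial `∏_θ (1 - X / sin² (πθ/n))`, `0 < θ < n`. Having constant term `1`, it is the
generating polynomial of the signed elementary symmetric functions of the numbers
`1 / sin² (πθ/n)`. -/
noncomputable def cscSqPoly (n : ℕ) : ℝ[X] :=
  ∏ θ ∈ Finset.Icc 1 (n - 1), (1 - C (1 / sin (π * θ / n) ^ 2) * X)

/-- The `k`-th power sum `∑_θ 1 / sin²ᵏ (πθ/n)`, `0 < θ < n`. -/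
noncomputable def cscSqPowerSum (n k : ℕ) : ℝ :=
  ∑ θ ∈ Finset.Icc 1 (n - 1), (1 / sin (π * θ / n) ^ 2) ^ k

theorem one_sub_T_comp_eq_mul_cscSqPoly {n : ℕ} (hn : n ≠ 0) :
    1 - (T ℝ n).comp (1 - 2 * X) = C (2 * (n : ℝ) ^ 2) * X * cscSqPoly n := by
  refine eq_of_infinite_eval_eq _ _ ((Set.Icc_infinite zero_lt_one).mono fun t ht ↦ ?_)
  obtain ⟨φ, rfl⟩ : ∃ φ, sin φ ^ 2 = t := by
    refine ⟨arcsin √t, ?_⟩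
    rw [sin_arcsin (by linarith [sqrt_nonneg t]) (by simpa using ht.2), sq_sqrt ht.1]
  have T_eval : (T ℝ n).eval (1 - 2 * sin φ ^ 2) = 1 - 2 * sin (n * φ) ^ 2 := by
    rw [← cos_two_mul_eq_one_sub, T_real_cos, ← cos_two_mul_eq_one_sub, Int.cast_natCast,
      mul_left_comm]
  simp only [Set.mem_ofPred_eq, eval_sub, eval_one, eval_comp, eval_mul, eval_ofNat, eval_X,
    eval_C, T_eval, cscSqPoly, eval_prod, sin_nat_mul_sq hn]
  ring

theorem coeff_cscSqPoly {n : ℕ} (hn : n ≠ 0) (k : ℕ) :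
    (cscSqPoly n).coeff k = ∏ l ∈ Finset.range k,
      (-2 * ((n : ℝ) ^ 2 - (l + 1) ^ 2) / ((l + 2) * (2 * l + 3))) := by
  have coeff_succ := congrArg (coeff · (k + 1)) (one_sub_T_comp_eq_mul_cscSqPoly hn)
  simp only [coeff_sub, coeff_one, Nat.add_eq_zero_iff, one_ne_zero, and_false, if_false,
    coeff_T_comp_one_sub_two_mul_X, Finset.prod_range_succ', mul_assoc, coeff_C_mul,
    coeff_X_mul] at coeff_succ
  have two_mul_sq_ne_zero : 2 * (n : ℝ) ^ 2 ≠ 0 := by positivity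
  apply mul_left_cancel₀ two_mul_sq_ne_zero
  rw [mul_assoc, ← coeff_succ]
  push_cast
  ring_nf

theorem cscSqPowerSum_succ (n k : ℕ) :
    cscSqPowerSum n (k + 1) = -((k + 1) * (cscSqPoly n).coeff (k + 1)) -
      ∑ j ∈ Finset.range k, (cscSqPoly n).coeff (j + 1) * cscSqPowerSum n (k - j) := by
  have coeff_zero : (cscSqPoly n).coeff 0 = 1 := by
    simp [cscSqPoly, coeff_zero_eq_eval_zero, eval_prod]
  have newton : ((k + 1 : ℕ) : ℝ) * (cscSqPoly n).coeff (k + 1) =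
      -∑ j ∈ Finset.range (k + 1), (cscSqPoly n).coeff j * cscSqPowerSum n (k + 1 - j) :=
    mul_coeff_prod_one_sub_C_mul_X _ _ _
  rw [Finset.sum_range_succ', coeff_zero] at newton
  simp only [Nat.add_sub_add_right, Nat.sub_zero] at newton
  push_cast at newton
  linear_combination newton

end Chebyshev

section PowerSums

variable {n : ℕ}

theorem cscSqPowerSum_one (hn : n ≠ 0) :
    cscSqPowerSum n 1 = (1 / 3) * n ^ 2 - 1 / 3 := by
  rw [cscSqPowerSum_succ]
  simp only [Finset.sum_range_zero, Finset.prod_range_succ, Finset.prod_range_zero,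
    coeff_cscSqPoly hn]
  push_cast
  ring

theorem cscSqPowerSum_two (hn : n ≠ 0) :
    cscSqPowerSum n 2 = (1 / 45) * n ^ 4 + (2 / 9) * n ^ 2 - 11 / 45 := by
  rw [cscSqPowerSum_succ]
  simp only [Finset.sum_range_succ, Finset.sum_range_zero, Finset.prod_range_succ,
    Finset.prod_range_zero, coeff_cscSqPoly hn, cscSqPowerSum_one hn]
  push_cast
  ring

theorem cscSqPowerSum_three (hn : n ≠ 0) :
    cscSqPowerSum n 3 =
      (2 / 945) * n ^ 6 + (1 / 45) * n ^ 4 + (8 / 45) * n ^ 2 - 191 / 945 := by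
  rw [cscSqPowerSum_succ]
  simp only [Finset.sum_range_succ, Finset.sum_range_zero, Finset.prod_range_succ,
    Finset.prod_range_zero, coeff_cscSqPoly hn, cscSqPowerSum_one hn, cscSqPowerSum_two hn]
  push_cast
  ring

theorem cscSqPowerSum_four (hn : n ≠ 0) :
    cscSqPowerSum n 4 =
      (1 / 4725) * n ^ 8 + (8 / 2835) * n ^ 6 + (14 / 675) * n ^ 4 + (16 / 105) * n ^ 2 -
        2497 / 14175 := by
  rw [cscSqPowerSum_succ]
  simp only [Finset.sum_range_succ, Finset.sum_range_zero, Finset.prod_range_succ,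
    Finset.prod_range_zero, coeff_cscSqPoly hn, cscSqPowerSum_one hn, cscSqPowerSum_two hn,
    cscSqPowerSum_three hn]
  push_cast
  ring

theorem cscSqPowerSum_five (hn : n ≠ 0) :
    cscSqPowerSum n 5 =
      (2 / 93555) * n ^ 10 + (1 / 2835) * n ^ 8 + (26 / 8505) * n ^ 6 + (164 / 8505) * n ^ 4 +
        (128 / 945) * n ^ 2 - 14797 / 93555 := by
  rw [cscSqPowerSum_succ]
  simp only [Finset.sum_range_succ, Finset.sum_range_zero, Finset.prod_range_succ,
    Finset.prod_range_zero, coeff_cscSqPoly hn, cscSqPowerSum_one hn, cscSqPowerSum_two hn,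
    cscSqPowerSum_three hn, cscSqPowerSum_four hn]
  push_cast
  ring

theorem cscSqPowerSum_six (hn : n ≠ 0) :
    cscSqPowerSum n 6 =
      (1382 / 638512875) * n ^ 12 + (4 / 93555) * n ^ 10 + (31 / 70875) * n ^ 8 +
        (556 / 178605) * n ^ 6 + (3832 / 212625) * n ^ 4 + (256 / 2079) * n ^ 2 -
        92427157 / 638512875 := by
  rw [cscSqPowerSum_succ]
  simp only [Finset.sum_range_succ, Finset.sum_range_zero, Finset.prod_range_succ,
    Finset.prod_range_zero, coeff_cscSqPoly hn, cscSqPowerSum_one hn, cscSqPowerSum_two hn,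
    cscSqPowerSum_three hn, cscSqPowerSum_four hn, cscSqPowerSum_five hn]
  push_cast
  ring

end PowerSums

theorem stmt_13_general (p : ℕ) (hp : p ≠ 0) :
    ∑ θ ∈ Finset.Icc 1 (p - 1), 1 / sin (π * θ / p) ^ 14 =
      (4 / 18243225) * (p : ℝ) ^ 14 +
        (1382 / 273648375) * p ^ 12 + (4 / 66825) * p ^ 10 + (311 / 637875) * p ^ 8 +
        (1184 / 382725) * p ^ 6 + (1888 / 111375) * p ^ 4 + (1024 / 9009) * p ^ 2 -
        36740617 / 273648375 := by
  have sum_eq : ∑ θ ∈ Finset.Icc 1 (p - 1), 1 / sin (π * θ / p) ^ 14 = cscSqPowerSum p 7 :=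
    Finset.sum_congr rfl fun θ _ ↦ by rw [one_div_pow, ← pow_mul]
  rw [sum_eq, cscSqPowerSum_succ]
  simp only [Finset.sum_range_succ, Finset.sum_range_zero, Finset.prod_range_succ,
    Finset.prod_range_zero, coeff_cscSqPoly hp, cscSqPowerSum_one hp, cscSqPowerSum_two hp,
    cscSqPowerSum_three hp, cscSqPowerSum_four hp, cscSqPowerSum_five hp, cscSqPowerSum_six hp]
  push_cast
  ring

theorem stmt_13 (p : ℕ) (hp : p.Prime) (hodd : Odd p) (hp14 : 14 < p) :
    ((p : ℝ) ^ 7 / 2 ^ 15) * ∑ θ ∈ Finset.Icc 1 (p - 1), 1 / Real.sin (π * θ / p) ^ 14 =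
      (1 / 32768) * (p : ℝ) ^ 7 * ((4 / 18243225) * (p : ℝ) ^ 14 +
        (1382 / 273648375) * p ^ 12 + (4 / 66825) * p ^ 10 + (311 / 637875) * p ^ 8 +
        (1184 / 382725) * p ^ 6 + (1888 / 111375) * p ^ 4 + (1024 / 9009) * p ^ 2 -
        36740617 / 273648375) := by
  rw [stmt_13_general p hp.ne_zero]
  ring
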